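/- For any x, y ∈ 𝕆 with ‖x‖ = ‖y‖ = 1, there exists a triality triple (A,B,C) with A(1) = x and B(1) = y. (That is, the action of Spin₈, realized as the group of triality triples, is transitive on S⁷ × S⁷.) -/

import Mathlib

noncomputable section

/-- The octonions as the Cayley–Dickson double of the quaternions. -/
abbrev Oct : Type := Quaternion ℝ × Quaternion ℝ

namespace Oct

/-- Cayley–Dickson multiplication: (a,b)·(c,d) = (ac − d̄b, da + bc̄). -/
def mul (x y : Oct) : Oct :=
  (x.1 * y.1 - star y.2 * x.2, y.2 * x.1 + x.2 * star y.1)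

/-- The unit 1 = (1,0). -/
def one : Oct := (1, 0)

/-- Octonionic conjugation κ(a,b) = (ā, −b). -/
def conj (x : Oct) : Oct := (star x.1, -x.2)

/-- The squared Euclidean norm ‖(a,b)‖² = ‖a‖² + ‖b‖². -/
def normSq (x : Oct) : ℝ := ‖x.1‖ ^ 2 + ‖x.2‖ ^ 2

/-- Left multiplication L(s) : y ↦ s·y. -/
def L (s : Oct) : Oct → Oct := fun y => mul s y

/-- A linear automorphism of 𝕆 is an isometry if it preserves the Euclidean norm. -/
def IsIsometry (A : Oct ≃ₗ[ℝ] Oct) : Prop := ∀ x, normSq (A x) = normSq x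

/-- A triality triple: ℝ-linear isometric bijections with B(x·y) = (Cx)·(Ay). -/
def IsTriality (A B C : Oct ≃ₗ[ℝ] Oct) : Prop :=
  IsIsometry A ∧ IsIsometry B ∧ IsIsometry C ∧
    ∀ x y : Oct, B (mul x y) = mul (C x) (A y)

/-- Octonionic conjugation κ as an ℝ-linear equivalence. -/
def kappa : Oct ≃ₗ[ℝ] Oct where
  toFun := conj
  invFun := conj
  left_inv := fun x => by simp [conj]
  right_inv := fun x => by simp [conj]
  map_add' := fun x y => by simp [conj, Prod.ext_iff, star_add, neg_add, add_comm]
  map_smul' := fun r x => by simp [conj, Prod.ext_iff]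

/-- D ↦ κ∘D∘κ. -/
def conjOp (D : Oct ≃ₗ[ℝ] Oct) : Oct ≃ₗ[ℝ] Oct := kappa.trans (D.trans kappa)

/-- Triples of ℝ-linear bijections of 𝕆. -/
abbrev Triple := (Oct ≃ₗ[ℝ] Oct) × (Oct ≃ₗ[ℝ] Oct) × (Oct ≃ₗ[ℝ] Oct)

/-- The triality map τ(A,B,C) = (κBκ, κCκ, A). -/
def tauMap (T : Triple) : Triple := (conjOp T.2.1, conjOp T.2.2, T.1)

/-- The outer involution σ(A,B,C) = (B, A, κCκ). -/
def sigmaMap (T : Triple) : Triple := (T.2.1, T.1, conjOp T.2.2)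

/-- The induced map on S⁷ × S⁷: t(x,y) = (ȳ, x·ȳ). -/
def tS (p : Oct × Oct) : Oct × Oct := (conj p.2, mul p.1 (conj p.2))

/-- The swap s(x,y) = (y,x). -/
def swap (p : Oct × Oct) : Oct × Oct := (p.2, p.1)

end Oct

open Oct

/-!
For a unit octonion `a`, the left Moufang identity says that `(L_ā, L_a, R_a L_a)` is a triality
triple. Conjugating by `κ` turns it into a second family `(L_a R_a, R_a, R_ā)`.

The first family with `a = x̄` moves `(1, x·y)` to `(x, y)`, so it suffices to reach `(1, y)` for
every unit `y`. Any unit `y` is a product `b·c` of two imaginary units: take `b` imaginary and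
orthogonal to `y`, and `c = b̄·y`. Since `b² = c² = -1`, applying the second family for `b` and
then for `c` sends `(1, 1)` to `(c·(b²·c), b·c) = (1, y)`.
-/

theorem exists_norm_eq_one_inner_eq_zero {𝕜 E : Type*} [RCLike 𝕜] [NormedAddCommGroup E]
    [InnerProductSpace 𝕜 E] (hE : 1 < Module.rank 𝕜 E) (x : E) :
    ∃ v : E, ‖v‖ = 1 ∧ inner 𝕜 x v = 0 := by
  have span_ne_top : Submodule.span 𝕜 {x} ≠ ⊤ := fun h ↦
    hE.not_ge (rank_top 𝕜 E ▸ h ▸ (rank_span_le {x}).trans (Cardinal.mk_singleton x).le)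
  obtain ⟨w, hw, hw0⟩ :=
    Submodule.exists_mem_ne_zero_of_ne_bot (mt Submodule.orthogonal_eq_bot_iff.mp span_ne_top)
  exact ⟨(‖w‖⁻¹ : 𝕜) • w, norm_smul_inv_norm hw0,
    by rw [inner_smul_right, Submodule.mem_orthogonal_singleton_iff_inner_right.mp hw, mul_zero]⟩

theorem quaternion_re_mul_comm {R : Type*} [CommRing R] (p q : Quaternion R) :
    (p * q).re = (q * p).re := by
  simp only [Quaternion.re_mul]
  ring

namespace Oct

protected theorem one_mul (x : Oct) : mul one x = x := by simp [mul, one]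

protected theorem mul_one (x : Oct) : mul x one = x := by simp [mul, one]

protected theorem mul_add (x y z : Oct) : mul x (y + z) = mul x y + mul x z := by
  ext1 <;> simp only [mul, Prod.fst_add, Prod.snd_add, star_add] <;> noncomm_ring

protected theorem mul_smul (r : ℝ) (x y : Oct) : mul x (r • y) = r • mul x y := by
  simp [mul, smul_sub]

protected theorem neg_mul (x y : Oct) : mul (-x) y = -mul x y := by
  simp [mul, sub_eq_add_neg, add_comm]

protected theorem mul_neg (x y : Oct) : mul x (-y) = -mul x y := by
  simp [mul, sub_eq_add_neg, add_comm]

theorem conj_conj (x : Oct) : conj (conj x) = x := by simp [conj]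

theorem conj_mul (x y : Oct) : conj (mul x y) = mul (conj y) (conj x) := by
  simp [conj, mul, sub_eq_add_neg, add_comm]

theorem conj_eq_neg {x : Oct} (hx : x.1.re = 0) : conj x = -x :=
  Prod.ext (Quaternion.star_eq_neg.mpr hx) rfl

theorem normSq_conj (x : Oct) : normSq (conj x) = normSq x := by simp [normSq, conj]

theorem normSq_mul (x y : Oct) : normSq (mul x y) = normSq x * normSq y := by
  obtain ⟨a, b⟩ := x
  obtain ⟨c, d⟩ := y
  have cross_terms : inner ℝ (a * c) (star d * b) = inner ℝ (d * a) (b * star c) := by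
    simp only [Quaternion.inner_def, star_mul, star_star, mul_assoc]
    rw [quaternion_re_mul_comm d]
    simp only [mul_assoc]
  simp only [normSq, mul, norm_sub_sq_real, norm_add_sq_real, norm_mul, norm_star, cross_terms]
  ring

theorem conj_mul_mul (x y : Oct) : mul (conj x) (mul x y) = normSq x • y := by
  obtain ⟨a, b⟩ := x
  obtain ⟨c, d⟩ := y
  simp only [normSq, sq, ← Quaternion.normSq_eq_norm_mul_self]
  ext1
  · calc star a * (a * c - star d * b) - star (d * a + b * star c) * -b
        = star a * a * c + c * (star b * b) := by
          simp only [star_add, star_mul, star_star]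
          noncomm_ring
      _ = (Quaternion.normSq a + Quaternion.normSq b) • c := by
          rw [Quaternion.star_mul_self, Quaternion.star_mul_self, Quaternion.coe_mul_eq_smul,
            Quaternion.mul_coe_eq_smul, add_smul]
  · calc (d * a + b * star c) * star a + -b * star (a * c - star d * b)
        = d * (a * star a) + b * star b * d := by
          simp only [star_sub, star_mul, star_star]
          noncomm_ring
      _ = (Quaternion.normSq a + Quaternion.normSq b) • d := by
          rw [Quaternion.self_mul_star, Quaternion.self_mul_star, Quaternion.mul_coe_eq_smul,
            Quaternion.coe_mul_eq_smul, add_smul]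

theorem conj_mul_mul_of_normSq_eq_one {x : Oct} (hx : normSq x = 1) (y : Oct) :
    mul (conj x) (mul x y) = y := by
  rw [conj_mul_mul, hx, one_smul]

theorem mul_conj_mul_of_normSq_eq_one {x : Oct} (hx : normSq x = 1) (y : Oct) :
    mul x (mul (conj x) y) = y := by
  simpa only [conj_conj] using conj_mul_mul_of_normSq_eq_one ((normSq_conj x).trans hx) y

theorem left_moufang (a x y : Oct) : mul a (mul x (mul a y)) = mul (mul (mul a x) a) y := by
  ext <;>
  simp only [mul, Quaternion.re_sub, Quaternion.imI_sub, Quaternion.imJ_sub, Quaternion.imK_sub,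
    Quaternion.re_add, Quaternion.imI_add, Quaternion.imJ_add, Quaternion.imK_add,
    Quaternion.re_mul, Quaternion.imI_mul, Quaternion.imJ_mul, Quaternion.imK_mul,
    Quaternion.re_star, Quaternion.imI_star, Quaternion.imJ_star, Quaternion.imK_star] <;>
  ring

theorem mul_self_of_re_eq_zero {x : Oct} (hx : x.1.re = 0) : mul x x = -(normSq x • one) := by
  rw [← conj_mul_mul, Oct.mul_one, conj_eq_neg hx, Oct.neg_mul, neg_neg]

theorem exists_mul_eq_and_re_eq_zero (y : Oct) :
    ∃ b c : Oct, mul b c = y ∧ normSq b = 1 ∧ b.1.re = 0 ∧ c.1.re = 0 := by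
  obtain ⟨v, norm_v, inner_v⟩ := exists_norm_eq_one_inner_eq_zero (𝕜 := ℝ)
    (by rw [Quaternion.rank_eq_four]; norm_num) y.2
  have normSq_b : normSq (0, v) = 1 := by simp [normSq, norm_v]
  have re_c : (star y.2 * v).re = 0 := by
    rw [quaternion_re_mul_comm, ← Quaternion.inner_def, real_inner_comm, inner_v]
  exact ⟨(0, v), mul (conj (0, v)) y, mul_conj_mul_of_normSq_eq_one normSq_b y, normSq_b, rfl,
    by simpa [mul, conj] using re_c⟩

/-- Left multiplication by a unit octonion as an `ℝ`-linear equivalence. The inverse is left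
multiplication by the conjugate, even though `𝕆` is not associative. -/
def leftMulEquiv (a : Oct) (ha : normSq a = 1) : Oct ≃ₗ[ℝ] Oct where
  toFun := mul a
  invFun := mul (conj a)
  left_inv := conj_mul_mul_of_normSq_eq_one ha
  right_inv := mul_conj_mul_of_normSq_eq_one ha
  map_add' := Oct.mul_add a
  map_smul' r := Oct.mul_smul r a

theorem leftMulEquiv_apply {a : Oct} (ha : normSq a = 1) (x : Oct) :
    leftMulEquiv a ha x = mul a x := rfl

theorem conjOp_apply (D : Oct ≃ₗ[ℝ] Oct) (x : Oct) : conjOp D x = conj (D (conj x)) := rfl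

/-- Right multiplication by a unit octonion, obtained from left multiplication by conjugating
with `κ`. -/
def rightMulEquiv (a : Oct) (ha : normSq a = 1) : Oct ≃ₗ[ℝ] Oct :=
  conjOp (leftMulEquiv (conj a) ((normSq_conj a).trans ha))

theorem rightMulEquiv_apply {a : Oct} (ha : normSq a = 1) (x : Oct) :
    rightMulEquiv a ha x = mul x a := by
  rw [rightMulEquiv, conjOp_apply, leftMulEquiv_apply, conj_mul, conj_conj, conj_conj]

theorem isIsometry_leftMulEquiv {a : Oct} (ha : normSq a = 1) : IsIsometry (leftMulEquiv a ha) :=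
  fun x ↦ by rw [leftMulEquiv_apply, normSq_mul, ha, one_mul]

theorem IsIsometry.conjOp {D : Oct ≃ₗ[ℝ] Oct} (hD : IsIsometry D) : IsIsometry (Oct.conjOp D) :=
  fun x ↦ by rw [conjOp_apply, normSq_conj, hD, normSq_conj]

theorem isIsometry_rightMulEquiv {a : Oct} (ha : normSq a = 1) :
    IsIsometry (rightMulEquiv a ha) :=
  (isIsometry_leftMulEquiv _).conjOp

theorem IsIsometry.trans {A B : Oct ≃ₗ[ℝ] Oct} (hA : IsIsometry A) (hB : IsIsometry B) :
    IsIsometry (A.trans B) :=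
  fun x ↦ by rw [LinearEquiv.trans_apply, hB, hA]

section IsTriality

variable {A B C A' B' C' : Oct ≃ₗ[ℝ] Oct}

theorem IsTriality.trans (h : IsTriality A B C) (h' : IsTriality A' B' C') :
    IsTriality (A.trans A') (B.trans B') (C.trans C') := by
  obtain ⟨hA, hB, hC, map_mul⟩ := h
  obtain ⟨hA', hB', hC', map_mul'⟩ := h'
  exact ⟨hA.trans hA', hB.trans hB', hC.trans hC', fun x y ↦ by
    simp only [LinearEquiv.trans_apply, map_mul, map_mul']⟩

theorem IsTriality.conjOp_reverse (h : IsTriality A B C) :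
    IsTriality (conjOp C) (conjOp B) (conjOp A) := by
  obtain ⟨hA, hB, hC, map_mul⟩ := h
  exact ⟨hC.conjOp, hB.conjOp, hA.conjOp, fun x y ↦ by
    simp only [conjOp_apply, conj_mul, map_mul]⟩

end IsTriality

theorem isTriality_leftMulEquiv {a : Oct} (ha : normSq a = 1) :
    IsTriality (leftMulEquiv (conj a) ((normSq_conj a).trans ha)) (leftMulEquiv a ha)
      ((leftMulEquiv a ha).trans (rightMulEquiv a ha)) := by
  refine ⟨isIsometry_leftMulEquiv _, isIsometry_leftMulEquiv _,
    (isIsometry_leftMulEquiv _).trans (isIsometry_rightMulEquiv _), fun x y ↦ ?_⟩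
  simp only [LinearEquiv.trans_apply, leftMulEquiv_apply, rightMulEquiv_apply]
  rw [← left_moufang, mul_conj_mul_of_normSq_eq_one ha]

theorem exists_isTriality_right_mul {a : Oct} (ha : normSq a = 1) :
    ∃ A B C : Oct ≃ₗ[ℝ] Oct, IsTriality A B C ∧ (∀ x, A x = mul a (mul x a)) ∧
      ∀ x, B x = mul x a := by
  have ha' : normSq (conj a) = 1 := (normSq_conj a).trans ha
  refine ⟨_, _, _, (isTriality_leftMulEquiv ha').conjOp_reverse, fun x ↦ ?_, fun x ↦ ?_⟩ <;>
    simp only [conjOp_apply, LinearEquiv.trans_apply, leftMulEquiv_apply, rightMulEquiv_apply,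
      conj_mul, conj_conj]

theorem exists_isTriality_map_one_eq_one {y : Oct} (hy : normSq y = 1) :
    ∃ A B C : Oct ≃ₗ[ℝ] Oct, IsTriality A B C ∧ A one = one ∧ B one = y := by
  obtain ⟨b, c, rfl, hb, re_b, re_c⟩ := exists_mul_eq_and_re_eq_zero y
  have hc : normSq c = 1 := by rwa [normSq_mul, hb, one_mul] at hy
  obtain ⟨A, B, C, hABC, hA, hB⟩ := exists_isTriality_right_mul hb
  obtain ⟨A', B', C', hABC', hA', hB'⟩ := exists_isTriality_right_mul hc
  refine ⟨_, _, _, hABC.trans hABC', ?_, ?_⟩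
  · have mul_self_b : mul b b = -one := by rw [mul_self_of_re_eq_zero re_b, hb, one_smul]
    have mul_self_c : mul c c = -one := by rw [mul_self_of_re_eq_zero re_c, hc, one_smul]
    calc A' (A one) = mul c (mul (mul b b) c) := by rw [hA', hA, Oct.one_mul]
      _ = -mul c c := by rw [mul_self_b, Oct.neg_mul, Oct.one_mul, Oct.mul_neg]
      _ = one := by rw [mul_self_c, neg_neg]
  · rw [LinearEquiv.trans_apply, hB', hB, Oct.one_mul]

end Oct

/-- for any unit octonions x, y there is a triality triple with
A(1) = x and B(1) = y (transitivity of Spin₈ on S⁷ × S⁷). -/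
theorem spin8_transitive_on_S7xS7 (x y : Oct) (hx : normSq x = 1) (hy : normSq y = 1) :
    ∃ A B C : Oct ≃ₗ[ℝ] Oct, IsTriality A B C ∧ A one = x ∧ B one = y := by
  have normSq_xy : normSq (mul x y) = 1 := by rw [normSq_mul, hx, hy, one_mul]
  obtain ⟨A, B, C, hABC, hA, hB⟩ := exists_isTriality_map_one_eq_one normSq_xy
  have hx' : normSq (conj x) = 1 := (normSq_conj x).trans hx
  refine ⟨_, _, _, hABC.trans (isTriality_leftMulEquiv hx'), ?_, ?_⟩
  · rw [LinearEquiv.trans_apply, hA, leftMulEquiv_apply, conj_conj, Oct.mul_one]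
  · rw [LinearEquiv.trans_apply, hB, leftMulEquiv_apply, conj_mul_mul_of_normSq_eq_one hx]
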